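/- Let k ≥ 2 and suppose f ∈ 𝒜_i for some 1 ≤ i ≤ k. Then: (1) μ_k(∂f) = μ_k(f) − 1 if ∂f ∈ 𝒜_j for some j with i < j, and μ_k(∂f) = μ_k(f) otherwise; (2) |∂f| = |f| − (k−1)·μ_k(f) if i = k, and |∂f| = |f| − (k−1)·μ_k(f) + (k−1−i) if i < k. -/

import Mathlib

/-!
Write `R p s` for `p ≤ s < p + k`. For `f ∈ ℱ` the greedy set `S = I^R_k(f)` is a `k`-separated subset
of the support of `f` such that every `p` in the support satisfies `R p s` for some `s ∈ S`
(`ir_spec`). A fixed `s` is related to at most one element of a `k`-separated set, and a fixed `p`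
likewise, so such relations compare cardinalities (`card_le_left`, `card_le_right`). In particular
every `k`-separated subset of the support has at most `|S|` elements, whence `μ_k(f) = |S|`
(`kmeasure_eq`).

Let `g = ∂f`. Every point of the support of `g` is related to some `s ∈ S`, so `μ_k(g) ≤ μ_k(f)`.
Conversely each `s ∈ S` with `s ≥ k` puts `s - k + 1` into the support of `g`, hence is related to
some element of `I^R_k(g)`. At most one element of `S` is less than `k`, namely `i` when `i < k`; it
is related to every element of `I^R_k(g)` that is at most `i`, and to no other. Hence
`μ_k(g) = μ_k(f) - 1` exactly when `i < k` and all of `I^R_k(g)` exceeds `i`, which is the condition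
`g ∈ 𝒜_j` for some `j > i` (`exists_aset_iff`).

For the weight, an element `s ∈ S` contributes a loss of `k - 1` if `s ≥ k`, and of `s` if `s < k`
(`wt_dmap`).
-/

noncomputable section
open scoped Classical

/-- `ℱ`: frequency lists, i.e. finitely supported functions on the positive
integers (extended by `f 0 = 0`). -/
def Freq : Set (ℕ → ℕ) := {f | f 0 = 0 ∧ (Function.support f).Finite}

/-- The largest index in the support of `f` (junk value for infinite support). -/
def topBound (f : ℕ → ℕ) : ℕ := sSup {i | f i ≠ 0}

/-- Greedy left-to-right scan with the given fuel: repeatedly select the least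
index `i ≥ lb` with `f i ≠ 0` and continue from `i + k`. -/
def ILaux (k : ℕ) (f : ℕ → ℕ) : ℕ → ℕ → Set ℕ
  | 0, _ => ∅
  | fuel + 1, lb =>
    let i := sInf {j | lb ≤ j ∧ f j ≠ 0}
    if i = 0 then ∅ else insert i (ILaux k f fuel (i + k))

/-- `I^L_k(f)`: the greedily chosen left endpoints of forward clusters. -/
def IL (k : ℕ) (f : ℕ → ℕ) : Set ℕ := ILaux k f (topBound f + 1) 1

/-- Greedy right-to-left scan with the given fuel: repeatedly select the
greatest index `i` with `1 ≤ i ≤ b` and `f i ≠ 0`, continuing from `i - k`. -/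
def IRaux (k : ℕ) (f : ℕ → ℕ) : ℕ → ℕ → Set ℕ
  | 0, _ => ∅
  | fuel + 1, b =>
    let i := sSup {j | 1 ≤ j ∧ j ≤ b ∧ f j ≠ 0}
    if i = 0 then ∅ else insert i (IRaux k f fuel (i - k))

/-- `I^R_k(f)`: the greedily chosen right endpoints of backward clusters. -/
def IR (k : ℕ) (f : ℕ → ℕ) : Set ℕ := IRaux k f (topBound f + 1) (topBound f)

/-- The `k`-measure of a frequency list: the largest cardinality of a set of
positive indices in the support of `f` that pairwise differ by at least `k`. -/
def kmeasureF (k : ℕ) (f : ℕ → ℕ) : ℕ :=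
  sSup {m | ∃ I : Finset ℕ, I.card = m ∧ (∀ i ∈ I, 1 ≤ i ∧ f i ≠ 0) ∧
    ∀ i ∈ I, ∀ j ∈ I, i < j → i + k ≤ j}

/-- The size `|f| = Σ i·f(i)` of the partition with frequency list `f`. -/
def wt (f : ℕ → ℕ) : ℕ := ∑ i ∈ Finset.range (topBound f + 1), i * f i


/-- The map `∂` (for the `α`-encoding, with ambient parameter `k`): for every
`i ∈ I^R_k(f)`, decrease the value at `i` by one and, when `i - k + 1 ≥ 1`,
increase the value at `i - k + 1` by one. -/
def dmap (k : ℕ) (f : ℕ → ℕ) : ℕ → ℕ := fun p =>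
  f p - (if p ∈ IR k f then 1 else 0) +
    (if 1 ≤ p ∧ p + k - 1 ∈ IR k f then 1 else 0)

/-- The map `α_k`: for every `i ∈ I^L_k(f)`, decrease the value at `i` by one
and increase the value at `i + k - 1` by one. -/
def alphaTop (k : ℕ) (f : ℕ → ℕ) : ℕ → ℕ := fun p =>
  f p - (if p ∈ IL k f then 1 else 0) +
    (if ∃ i ∈ IL k f, p = i + k - 1 then 1 else 0)

/-- The map `α_j` for `1 ≤ j ≤ k` (ambient parameter `k`): for `j = k` it is
`alphaTop`; for `j < k`, it fixes values below `j`, increments the value at `j`,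
and acts as `α_k` on the shifted tail `i ↦ f (j + i)`. -/
def alphaMap (k j : ℕ) (f : ℕ → ℕ) : ℕ → ℕ :=
  if j = k then alphaTop k f
  else fun p =>
    if p < j then f p
    else if p = j then f j + 1
    else alphaTop k (fun i => f (j + i)) (p - j)

/-- The class `𝒜_j` (ambient parameter `k`): for `j < k` it consists of the
`f ∈ ℱ` with `min I^R_k(f) = j`; `𝒜_k` is the complement in `ℱ` of the others. -/
def Aset (k j : ℕ) : Set (ℕ → ℕ) :=
  if j = k then
    Freq \ ⋃ j' ∈ Finset.Ico 1 k, {f ∈ Freq | IsLeast (IR k f) j'}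
  else {f ∈ Freq | IsLeast (IR k f) j}

/-! ### Separated sets -/

/-- `I` is `k`-separated: distinct elements differ by at least `k`. -/
def KSep (k : ℕ) (I : Finset ℕ) : Prop := ∀ i ∈ I, ∀ j ∈ I, i < j → i + k ≤ j

/-- For a fixed `s` the relation `p ≤ s < p + k` holds for at most one `p` in a separated set, so
choosing a partner for each `p ∈ I` is injective. -/
theorem card_le_left {k : ℕ} {I T : Finset ℕ} (hI : KSep k I)
    (h : ∀ p ∈ I, ∃ s ∈ T, p ≤ s ∧ s < p + k) : I.card ≤ T.card := by
  choose! φ h1 h2 h3 using h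
  refine Finset.card_le_card_of_injOn φ (fun p hp => h1 p hp) ?_
  intro p hp q hq hpq
  have hp : p ∈ I := hp
  have hq : q ∈ I := hq
  have a1 := h2 p hp
  have a2 := h3 p hp
  have b1 := h2 q hq
  have b2 := h3 q hq
  rw [hpq] at a1 a2
  rcases lt_trichotomy p q with c | c | c
  · have := hI p hp q hq c
    omega
  · exact c
  · have := hI q hq p hp c
    omega

/-- The mirror image of `card_le_left`: a fixed `p` has at most one partner `s` in a separated
set. -/
theorem card_le_right {k : ℕ} {I T : Finset ℕ} (hT : KSep k T)
    (h : ∀ s ∈ T, ∃ p ∈ I, p ≤ s ∧ s < p + k) : T.card ≤ I.card := by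
  choose! φ h1 h2 h3 using h
  refine Finset.card_le_card_of_injOn φ (fun p hp => h1 p hp) ?_
  intro p hp q hq hpq
  have hp : p ∈ T := hp
  have hq : q ∈ T := hq
  have a1 := h2 p hp
  have a2 := h3 p hp
  have b1 := h2 q hq
  have b2 := h3 q hq
  rw [hpq] at a1 a2
  rcases lt_trichotomy p q with c | c | c
  · have := hT p hp q hq c
    omega
  · exact c
  · have := hT q hq p hp c
    omega

/-! ### The greedy set -/

/-- The fuel `n` suffices as soon as `b ≤ n`, because each step lowers the bound `b`. -/
theorem iraux_spec {k : ℕ} (hk : 2 ≤ k) (f : ℕ → ℕ) (n : ℕ) : ∀ b, b ≤ n →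
    (∀ s ∈ IRaux k f n b, 1 ≤ s ∧ s ≤ b ∧ f s ≠ 0) ∧
    (∀ s ∈ IRaux k f n b, ∀ t ∈ IRaux k f n b, s < t → s + k ≤ t) ∧
    (∀ p, 1 ≤ p → p ≤ b → f p ≠ 0 → ∃ s ∈ IRaux k f n b, p ≤ s ∧ s < p + k) := by
  induction n with
  | zero =>
    intro b hb
    simp only [IRaux, Set.mem_empty_iff_false]
    refine ⟨by simp, by simp, fun p h1 h2 => by omega⟩
  | succ n ih =>
    intro b hb
    set A : Set ℕ := {j | 1 ≤ j ∧ j ≤ b ∧ f j ≠ 0} with hA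
    have hbdd : BddAbove A := ⟨b, fun j hj => hj.2.1⟩
    have hle : ∀ p, 1 ≤ p → p ≤ b → f p ≠ 0 → p ≤ sSup A :=
      fun p h1 h2 h3 => le_csSup hbdd ⟨h1, h2, h3⟩
    have hdef : IRaux k f (n + 1) b =
        if sSup A = 0 then ∅ else insert (sSup A) (IRaux k f n (sSup A - k)) := rfl
    rw [hdef]
    split_ifs with h0
    · refine ⟨by simp, by simp, fun p h1 h2 h3 => ?_⟩
      have := hle p h1 h2 h3
      omega
    · have hne : A.Nonempty := by
        by_contra hc
        rw [Set.not_nonempty_iff_eq_empty] at hc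
        rw [hc] at h0
        simp at h0
      obtain ⟨m1, m2, m3⟩ : 1 ≤ sSup A ∧ sSup A ≤ b ∧ f (sSup A) ≠ 0 := Nat.sSup_mem hne hbdd
      obtain ⟨i1, i2, i3⟩ := ih (sSup A - k) (by omega)
      generalize sSup A = i at *
      refine ⟨?_, ?_, ?_⟩
      · rintro s (rfl | hs)
        · exact ⟨m1, m2, m3⟩
        · have := i1 s hs
          exact ⟨this.1, by omega, this.2.2⟩
      · rintro s (rfl | hs) t (rfl | ht) hst
        · omega
        · have := i1 t ht
          omega
        · have := i1 s hs
          omega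
        · exact i2 s hs t ht hst
      · intro p h1 h2 h3
        have h4 := hle p h1 h2 h3
        by_cases h5 : p ≤ i - k
        · obtain ⟨s, hs, h6⟩ := i3 p h1 h5 h3
          exact ⟨s, Or.inr hs, h6⟩
        · exact ⟨i, Or.inl rfl, h4, by omega⟩

theorem le_topBound {f : ℕ → ℕ} (hf : f ∈ Freq) {p : ℕ} (hp : f p ≠ 0) : p ≤ topBound f :=
  le_csSup hf.2.bddAbove hp

theorem pos_of_ne {f : ℕ → ℕ} (hf : f ∈ Freq) {p : ℕ} (hp : f p ≠ 0) : 1 ≤ p := by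
  rcases Nat.eq_zero_or_pos p with rfl | h
  · exact absurd hf.1 hp
  · exact h

/-- The properties of `I^R_k(f)` on which everything rests: it is a finite `k`-separated subset of
the support of `f`, and every `p` in the support has some `s ∈ I^R_k(f)` with `p ≤ s < p + k`. -/
theorem ir_spec {k : ℕ} (hk : 2 ≤ k) {f : ℕ → ℕ} (hf : f ∈ Freq) :
    ∃ S : Finset ℕ, (∀ s, s ∈ IR k f ↔ s ∈ S) ∧ (∀ s ∈ S, 1 ≤ s ∧ f s ≠ 0) ∧ KSep k S ∧
      ∀ p, f p ≠ 0 → ∃ s ∈ S, p ≤ s ∧ s < p + k := by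
  obtain ⟨h1, h2, h3⟩ := iraux_spec hk f (topBound f + 1) (topBound f) (by omega)
  have hfin : (IR k f).Finite := (Set.finite_Iic (topBound f)).subset fun s hs => (h1 s hs).2.1
  have hmem : ∀ s, s ∈ IR k f ↔ s ∈ hfin.toFinset := by simp
  refine ⟨hfin.toFinset, hmem, fun s hs => ?_, fun s hs t ht => ?_, fun p hp => ?_⟩
  · have := h1 s ((hmem s).2 hs)
    exact ⟨this.1, this.2.2⟩
  · exact h2 s ((hmem s).2 hs) t ((hmem t).2 ht)
  · obtain ⟨s, hs, h⟩ := h3 p (pos_of_ne hf hp) (le_topBound hf hp) hp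
    exact ⟨s, (hmem s).1 hs, h⟩

/-- The greedy set attains the `k`-measure. -/
theorem kmeasure_eq {k : ℕ} {f : ℕ → ℕ} {S : Finset ℕ}
    (h1 : ∀ s ∈ S, 1 ≤ s ∧ f s ≠ 0) (h2 : KSep k S)
    (h3 : ∀ p, f p ≠ 0 → ∃ s ∈ S, p ≤ s ∧ s < p + k) : kmeasureF k f = S.card := by
  refine IsGreatest.csSup_eq ⟨⟨S, rfl, h1, h2⟩, ?_⟩
  rintro m ⟨I, rfl, hI, hsep⟩
  exact card_le_left hsep fun p hp => h3 p (hI p hp).2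

/-! ### The classes `𝒜_j` and the effect of `∂` -/

theorem wt_eq_sum {f : ℕ → ℕ} (hf : f ∈ Freq) {N : ℕ} (hN : ∀ p, f p ≠ 0 → p < N) :
    wt f = ∑ p ∈ Finset.range N, p * f p := by
  have key : ∀ M M' : ℕ, (∀ p, f p ≠ 0 → p < M) → M ≤ M' →
      ∑ p ∈ Finset.range M, p * f p = ∑ p ∈ Finset.range M', p * f p := by
    intro M M' hM hMM
    refine Finset.sum_subset (Finset.range_subset_range.2 hMM) fun p _ hp => ?_
    by_contra hc
    exact hp (Finset.mem_range.2 (hM p (right_ne_zero_of_mul hc)))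
  have hT : ∀ p, f p ≠ 0 → p < topBound f + 1 := fun p hp => Nat.lt_succ_of_le (le_topBound hf hp)
  unfold wt
  rw [key _ (max (topBound f + 1) N) hT (le_max_left _ _), key N _ hN (le_max_right _ _)]

theorem aset_freq {k i : ℕ} {f : ℕ → ℕ} (h : f ∈ Aset k i) : f ∈ Freq := by
  unfold Aset at h
  split_ifs at h
  · exact h.1
  · exact h.1

theorem aset_lt {k i : ℕ} (hi : i < k) {f : ℕ → ℕ} :
    f ∈ Aset k i ↔ f ∈ Freq ∧ IsLeast (IR k f) i := by
  unfold Aset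
  rw [if_neg (by omega)]
  rfl

theorem aset_self {k : ℕ} {f : ℕ → ℕ} (hpos : ∀ s ∈ IR k f, 1 ≤ s) :
    f ∈ Aset k k ↔ f ∈ Freq ∧ ∀ s ∈ IR k f, k ≤ s := by
  unfold Aset
  rw [if_pos rfl]
  constructor
  · rintro ⟨hf, hn⟩
    refine ⟨hf, fun s hs => ?_⟩
    by_contra hlt
    have hl : IsLeast (IR k f) (sInf (IR k f)) :=
      ⟨Nat.sInf_mem ⟨s, hs⟩, fun t ht => Nat.sInf_le ht⟩
    refine hn ?_
    simp only [Set.mem_iUnion]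
    have := hl.2 hs
    exact ⟨sInf (IR k f), Finset.mem_Ico.2 ⟨hpos _ hl.1, by omega⟩, hf, hl⟩
  · rintro ⟨hf, hn⟩
    refine ⟨hf, fun hc => ?_⟩
    simp only [Set.mem_iUnion] at hc
    obtain ⟨j, hj, _, hl⟩ := hc
    have := hn j hl.1
    have := (Finset.mem_Ico.1 hj).2
    omega

/-- The case `j = k` of the left side covers all `g` for which `I^R_k(g)` has no element below `k`,
including `g = 0`. -/
theorem exists_aset_iff {k i : ℕ} (hi : i < k) {g : ℕ → ℕ} (hg : g ∈ Freq)
    (hpos : ∀ s ∈ IR k g, 1 ≤ s) :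
    (∃ j, i < j ∧ j ≤ k ∧ g ∈ Aset k j) ↔ ∀ s ∈ IR k g, i < s := by
  constructor
  · rintro ⟨j, h1, h2, h3⟩ s hs
    rcases h2.lt_or_eq with h | rfl
    · have := ((aset_lt h).1 h3).2.2 hs
      omega
    · have := ((aset_self hpos).1 h3).2 s hs
      omega
  · intro h
    by_cases hall : ∀ s ∈ IR k g, k ≤ s
    · exact ⟨k, hi, le_rfl, (aset_self hpos).2 ⟨hg, hall⟩⟩
    · push Not at hall
      obtain ⟨s, hs, hsk⟩ := hall
      have hl : IsLeast (IR k g) (sInf (IR k g)) :=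
        ⟨Nat.sInf_mem ⟨s, hs⟩, fun t ht => Nat.sInf_le ht⟩
      have := hl.2 hs
      have hlt : sInf (IR k g) < k := by omega
      exact ⟨sInf (IR k g), h _ hl.1, hlt.le, (aset_lt hlt).2 ⟨hg, hl⟩⟩

theorem dmap_ne {k : ℕ} {f : ℕ → ℕ} {p : ℕ} (h : dmap k f p ≠ 0) :
    f p ≠ 0 ∨ (1 ≤ p ∧ p + k - 1 ∈ IR k f) := by
  by_contra hc
  push Not at hc
  apply h
  have hn : ¬(1 ≤ p ∧ p + k - 1 ∈ IR k f) := fun h => hc.2 h.1 h.2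
  unfold dmap
  rw [hc.1, if_neg hn]
  simp

theorem dmap_freq {k : ℕ} (hk : 2 ≤ k) {f : ℕ → ℕ} (hf : f ∈ Freq) :
    dmap k f ∈ Freq ∧ ∀ p, dmap k f p ≠ 0 → p < topBound f + 1 := by
  obtain ⟨S, hS, h1, -, -⟩ := ir_spec hk hf
  have hb : ∀ p, dmap k f p ≠ 0 → p < topBound f + 1 := by
    intro p hp
    rcases dmap_ne hp with h | h
    · have := le_topBound hf h
      omega
    · have := le_topBound hf (h1 _ ((hS _).1 h.2)).2
      omega
  refine ⟨⟨?_, (Set.finite_Iio (topBound f + 1)).subset fun p hp => hb p hp⟩, hb⟩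
  simp [dmap, hf.1]

/-- An index `s ≥ k` moves to `s - k + 1`, losing `k - 1`; an index `s < k` is removed. -/
theorem wt_dmap {k : ℕ} (hk : 2 ≤ k) {f : ℕ → ℕ} (hf : f ∈ Freq) {S : Finset ℕ}
    (hS : ∀ s, s ∈ IR k f ↔ s ∈ S) (h1 : ∀ s ∈ S, 1 ≤ s ∧ f s ≠ 0) :
    (wt (dmap k f) : ℤ) = wt f - ∑ s ∈ S, (if k ≤ s then (k : ℤ) - 1 else s) := by
  obtain ⟨hg, hN⟩ := dmap_freq hk hf
  set N := topBound f + 1 with hNdef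
  have hfN : ∀ p, f p ≠ 0 → p < N := fun p hp => Nat.lt_succ_of_le (le_topBound hf hp)
  have hSN : ∀ s ∈ S, s < N := fun s hs => hfN s (h1 s hs).2
  rw [wt_eq_sum hg hN, wt_eq_sum hf hfN]
  push_cast
  have hterm : ∀ p ∈ Finset.range N, (p : ℤ) * (dmap k f p : ℤ) =
      p * f p - (if p ∈ S then (p : ℤ) else 0)
        + (if 1 ≤ p ∧ p + k - 1 ∈ S then (p : ℤ) else 0) := by
    intro p _
    simp only [dmap, hS]
    by_cases hp : p ∈ S
    · -- `f p` is positive here, so the truncated subtraction in `dmap` is genuine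
      have := (h1 p hp).2
      rw [if_pos hp, if_pos hp]
      push_cast [Nat.cast_sub (Nat.one_le_iff_ne_zero.2 this)]
      split_ifs <;> ring
    · rw [if_neg hp, if_neg hp]
      push_cast
      split_ifs
      · rw [tsub_zero]
        ring
      · simp
  rw [Finset.sum_congr rfl hterm, Finset.sum_add_distrib, Finset.sum_sub_distrib]
  have e1 : ∑ p ∈ Finset.range N, (if p ∈ S then (p : ℤ) else 0) = ∑ s ∈ S, (s : ℤ) := by
    rw [← Finset.sum_filter]
    refine Finset.sum_congr ?_ fun _ _ => rfl
    ext p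
    simp only [Finset.mem_filter, Finset.mem_range]
    exact ⟨fun h => h.2, fun h => ⟨hSN p h, h⟩⟩
  have e2 : ∑ p ∈ Finset.range N, (if 1 ≤ p ∧ p + k - 1 ∈ S then (p : ℤ) else 0) =
      ∑ s ∈ S, (if k ≤ s then (s : ℤ) - k + 1 else 0) := by
    rw [← Finset.sum_filter, ← Finset.sum_filter]
    refine Finset.sum_bij' (fun p _ => p + k - 1) (fun s _ => s - k + 1) ?_ ?_ ?_ ?_ ?_
    · intro p hp
      simp only [Finset.mem_filter, Finset.mem_range] at hp ⊢
      exact ⟨hp.2.2, by omega⟩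
    · intro s hs
      simp only [Finset.mem_filter, Finset.mem_range] at hs ⊢
      have := hSN s hs.1
      refine ⟨by omega, by omega, ?_⟩
      rw [show s - k + 1 + k - 1 = s by omega]
      exact hs.1
    · intro p hp
      simp only [Finset.mem_filter, Finset.mem_range] at hp
      omega
    · intro s hs
      simp only [Finset.mem_filter] at hs
      omega
    · intro p hp
      simp only [Finset.mem_filter, Finset.mem_range] at hp
      rw [Nat.cast_sub (by omega)]
      push_cast
      ring
  rw [e1, e2]
  have e3 : ∑ s ∈ S, (s : ℤ) - ∑ s ∈ S, (if k ≤ s then (s : ℤ) - k + 1 else 0) =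
      ∑ s ∈ S, (if k ≤ s then (k : ℤ) - 1 else s) := by
    rw [← Finset.sum_sub_distrib]
    refine Finset.sum_congr rfl fun s _ => ?_
    split_ifs <;> ring
  rw [← e3]
  ring

theorem statement9 (k : ℕ) (hk : 2 ≤ k) (i : ℕ) (hi1 : 1 ≤ i) (hik : i ≤ k)
    (f : ℕ → ℕ) (hf : f ∈ Aset k i) :
    (((∃ j, i < j ∧ j ≤ k ∧ dmap k f ∈ Aset k j) →
        (kmeasureF k (dmap k f) : ℤ) = (kmeasureF k f : ℤ) - 1) ∧
     (¬(∃ j, i < j ∧ j ≤ k ∧ dmap k f ∈ Aset k j) →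
        kmeasureF k (dmap k f) = kmeasureF k f)) ∧
    ((i = k →
        (wt (dmap k f) : ℤ) = (wt f : ℤ) - ((k : ℤ) - 1) * (kmeasureF k f : ℤ)) ∧
     (i < k →
        (wt (dmap k f) : ℤ) =
          (wt f : ℤ) - ((k : ℤ) - 1) * (kmeasureF k f : ℤ) + ((k : ℤ) - 1 - (i : ℤ)))) := by
  have hfF := aset_freq hf
  obtain ⟨hgF, -⟩ := dmap_freq hk hfF
  obtain ⟨S, hS, S1, S2, S3⟩ := ir_spec hk hfF
  obtain ⟨T, hT, T1, T2, T3⟩ := ir_spec hk hgF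
  have hposf : ∀ s ∈ IR k f, 1 ≤ s := fun s hs => (S1 s ((hS s).1 hs)).1
  have hposg : ∀ s ∈ IR k (dmap k f), 1 ≤ s := fun s hs => (T1 s ((hT s).1 hs)).1
  rw [kmeasure_eq S1 S2 S3, kmeasure_eq T1 T2 T3, wt_dmap hk hfF hS S1]
  have hcover : ∀ p ∈ T, ∃ s ∈ S, p ≤ s ∧ s < p + k := by
    intro p hp
    rcases dmap_ne (T1 p hp).2 with h | h
    · exact S3 p h
    · exact ⟨p + k - 1, (hS _).1 h.2, by omega, by omega⟩
  have hle : T.card ≤ S.card := card_le_left T2 hcover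
  have hback : ∀ s ∈ S, k ≤ s → ∃ p ∈ T, p ≤ s ∧ s < p + k := by
    intro s hs hks
    have hne : dmap k f (s - k + 1) ≠ 0 := by
      unfold dmap
      rw [if_pos (c := 1 ≤ s - k + 1 ∧ _)
        ⟨by omega, by rw [show s - k + 1 + k - 1 = s by omega]; exact (hS s).2 hs⟩]
      omega
    obtain ⟨p, hp, h1, h2⟩ := T3 _ hne
    -- `p` may be larger than `s - k + 1`, but it is at most `s` and within `k` of `s`
    exact ⟨p, hp, by omega, by omega⟩
  rcases hik.lt_or_eq with hlt | rfl
  · obtain ⟨-, hmem, hmin⟩ := (aset_lt hlt).1 hf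
    have hiS : i ∈ S := (hS i).1 hmem
    have hbig : ∀ s ∈ S.erase i, k ≤ s := by
      intro s hs
      obtain ⟨h1, h2⟩ := Finset.mem_erase.1 hs
      have h3 := hmin ((hS s).2 h2)
      have := S2 i hiS s h2 (by omega)
      omega
    have hcard : (S.erase i).card + 1 = S.card := Finset.card_erase_add_one hiS
    rw [exists_aset_iff hlt hgF hposg]
    refine ⟨⟨fun h => ?_, fun h => ?_⟩, fun h => by omega, fun _ => ?_⟩
    · have a : T.card ≤ (S.erase i).card := by
        refine card_le_left T2 fun p hp => ?_
        obtain ⟨s, hs, h1, h2⟩ := hcover p hp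
        have := h p ((hT p).2 hp)
        exact ⟨s, Finset.mem_erase.2 ⟨by omega, hs⟩, h1, h2⟩
      have b : (S.erase i).card ≤ T.card :=
        card_le_right (fun x hx y hy => S2 x (Finset.mem_of_mem_erase hx) y
          (Finset.mem_of_mem_erase hy))
          fun s hs => hback s (Finset.mem_of_mem_erase hs) (hbig s hs)
      omega
    · push Not at h
      obtain ⟨p, hp, hpi⟩ := h
      refine le_antisymm hle (card_le_right S2 fun s hs => ?_)
      by_cases hsi : s = i
      · have := hposg p hp
        exact ⟨p, (hT p).1 hp, by omega, by omega⟩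
      · exact hback s hs (hbig s (Finset.mem_erase.2 ⟨hsi, hs⟩))
    · rw [← Finset.add_sum_erase S _ hiS, if_neg (by omega),
        Finset.sum_congr rfl fun s hs => if_pos (hbig s hs), Finset.sum_const, ← hcard, nsmul_eq_mul]
      push_cast
      ring
  · have hbig : ∀ s ∈ S, i ≤ s := fun s hs => ((aset_self hposf).1 hf).2 s ((hS s).2 hs)
    refine ⟨⟨?_, fun _ => ?_⟩, fun _ => ?_, fun h => by omega⟩
    · rintro ⟨j, h1, h2, -⟩
      omega
    · exact le_antisymm hle (card_le_right S2 fun s hs => hback s hs (hbig s hs))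
    · rw [Finset.sum_congr rfl fun s hs => if_pos (hbig s hs), Finset.sum_const, nsmul_eq_mul]
      ring
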